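/- Let k ≥ 2, κ := 2^{k−1}, ε ∈ (0,1), let Q0 ≥ 2 be a real number, let q1 ∈ ℤ[i] \ {0} and r1, j ∈ ℤ[i]. Set S_k(q1,r1,j) := ∑_{q∈ℤ[i]} exp(−π N(q)/(κ Q0)) · e(Re(j r1 q^k / q1^k)). Then |S_k(q1,r1,j)|^κ ≤ C(k,ε) · Q0^{κ−k+1+ε} · ∑_{α=(α_1,…,α_{k−1})∈ℤ[i]^{k−1}, N(α_v)≤Q0^{1+ε} for all v} ∑_{β∈ℤ[i]} exp(−π Q0 · N(β − conj(k!·α_1⋯α_{k−1}·j·r1 / q1^k))), where conj denotes complex conjugation and C(k,ε) depends only on k and ε. -/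

import Mathlib

noncomputable section

/-- `e(t) = exp(2πit)`. -/
def e (t : ℝ) : ℂ := Complex.exp (2 * Real.pi * Complex.I * t)

/-- The norm of a Gaussian integer, as a real number. -/
def gN (z : GaussianInt) : ℝ := (z.re : ℝ) ^ 2 + (z.im : ℝ) ^ 2

/-- The norm form on `ℂ`: `N(z) = (Re z)² + (Im z)²`. -/
def cN (z : ℂ) : ℝ := z.re ^ 2 + z.im ^ 2

/-- The smoothed `k`-th power Gauss-type sum
`S_k(q₁,r₁,j) = ∑_{q ∈ ℤ[i]} exp(-π N(q)/(κQ₀)) e(Re(j r₁ q^k/q₁^k))`, `κ = 2^{k-1}`. -/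
def Sk (k : ℕ) (Q0 : ℝ) (q1 r1 j : GaussianInt) : ℂ :=
  ∑' q : GaussianInt,
    ((Real.exp (-Real.pi * gN q / ((2 : ℝ) ^ (k - 1) * Q0)) : ℝ) : ℂ)
      * e (((j : ℂ) * (r1 : ℂ) * (q : ℂ) ^ k / (q1 : ℂ) ^ k).re)

section WP

open Polynomial
open scoped ENNReal

lemma wp_norm_e (t : ℝ) : ‖e t‖ = 1 := by
  have : e t = Complex.exp (((2 * Real.pi * t : ℝ) : ℂ) * Complex.I) := by
    unfold e; congr 1; push_cast; ring
  rw [this, Complex.norm_exp_ofReal_mul_I]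

lemma wp_e_add (s t : ℝ) : e (s + t) = e s * e t := by
  unfold e; rw [← Complex.exp_add]; congr 1; push_cast; ring

lemma wp_conj_e (t : ℝ) : (starRingEnd ℂ) (e t) = e (-t) := by
  unfold e; rw [← Complex.exp_conj]; congr 1; simp [Complex.conj_ofNat]

lemma wp_summable1 {t : ℝ} (ht : 0 < t) (u : ℝ) :
    Summable (fun n : ℤ => Real.exp (-t * ((n : ℝ) + u) ^ 2)) := by
  have hpi := Real.pi_pos
  have h := (summable_jacobiTheta₂_term_iff (((t * u / Real.pi : ℝ) : ℂ) * Complex.I)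
    (((t / Real.pi : ℝ) : ℂ) * Complex.I)).2 (by simp; positivity)
  have h2 := h.norm.mul_left (Real.exp (-t * u ^ 2))
  refine h2.congr fun n => ?_
  rw [norm_jacobiTheta₂_term, ← Real.exp_add]
  congr 1
  simp only [Complex.mul_im, Complex.ofReal_re, Complex.ofReal_im, Complex.I_re, Complex.I_im]
  field_simp
  ring

lemma wp_poisson1 {t : ℝ} (ht : 0 < t) (u b : ℝ) :
    ‖∑' n : ℤ, ((Real.exp (-t * ((n : ℝ) + u) ^ 2) : ℝ) : ℂ) * e (b * n)‖
      ≤ Real.sqrt (Real.pi / t) * ∑' n : ℤ, Real.exp (-(Real.pi ^ 2 / t) * ((n : ℝ) + (- b)) ^ 2) := by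
  have hpi := Real.pi_pos
  have ha : 0 < (((t / Real.pi : ℝ) : ℂ)).re := by simp; positivity
  have key := Complex.tsum_exp_neg_quadratic ha (((-t * u / Real.pi : ℝ) : ℂ) + b * Complex.I)
  have hpc : (Real.pi : ℂ) ≠ 0 := by exact_mod_cast hpi.ne'
  have htc : (t : ℂ) ≠ 0 := by exact_mod_cast ht.ne'
  have e1 : (∑' n : ℤ, ((Real.exp (-t * ((n : ℝ) + u) ^ 2) : ℝ) : ℂ) * e (b * n))
      = ((Real.exp (-t * u ^ 2) : ℝ) : ℂ) * ∑' n : ℤ, Complex.exp (-Real.pi * ((t / Real.pi : ℝ) : ℂ) * n ^ 2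
        + 2 * Real.pi * (((-t * u / Real.pi : ℝ) : ℂ) + b * Complex.I) * n) := by
    rw [← tsum_mul_left]
    congr 1; ext n
    unfold e
    rw [Complex.ofReal_exp, Complex.ofReal_exp, ← Complex.exp_add, ← Complex.exp_add]
    congr 1
    push_cast
    field_simp
    ring
  rw [e1, key, norm_mul, norm_mul]
  have e2 : ‖(1 / ((t / Real.pi : ℝ) : ℂ) ^ (1 / 2 : ℂ))‖ = Real.sqrt (Real.pi / t) := by
    rw [norm_div, norm_one, Complex.norm_cpow_eq_rpow_re_of_pos (by positivity)]
    have : ((1 / 2 : ℂ)).re = 1 / 2 := by norm_num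
    rw [this, ← Real.sqrt_eq_rpow, one_div, ← Real.sqrt_inv, inv_div]
  have e3 : ∀ n : ℤ, ‖Complex.exp (-Real.pi / ((t / Real.pi : ℝ) : ℂ) *
      ((n : ℂ) + Complex.I * (((-t * u / Real.pi : ℝ) : ℂ) + b * Complex.I)) ^ 2)‖
      = Real.exp (t * u ^ 2) * Real.exp (-(Real.pi ^ 2 / t) * ((n : ℝ) + (- b)) ^ 2) := by
    intro n
    rw [Complex.norm_exp, ← Real.exp_add]
    congr 1
    have : (-Real.pi / ((t / Real.pi : ℝ) : ℂ) *
      ((n : ℂ) + Complex.I * (((-t * u / Real.pi : ℝ) : ℂ) + b * Complex.I)) ^ 2)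
      = ((-(Real.pi ^ 2 / t) : ℝ) : ℂ) * (((n - b : ℝ) : ℂ) + ((-t * u / Real.pi : ℝ) : ℂ) * Complex.I) ^ 2 := by
      have h1 : Complex.I * (((-t * u / Real.pi : ℝ) : ℂ) + b * Complex.I)
        = -b + ((-t * u / Real.pi : ℝ) : ℂ) * Complex.I := by
        ring_nf; rw [Complex.I_sq]; ring
      rw [h1]
      push_cast
      field_simp
      ring
    rw [this, Complex.re_ofReal_mul, sq (_ + _)]
    simp only [Complex.mul_re, Complex.add_re, Complex.add_im, Complex.mul_im, Complex.ofReal_re, Complex.ofReal_im, Complex.I_re, Complex.I_im]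
    field_simp
    ring
  have hs : Summable (fun n : ℤ => ‖Complex.exp (-Real.pi / ((t / Real.pi : ℝ) : ℂ) *
      ((n : ℂ) + Complex.I * (((-t * u / Real.pi : ℝ) : ℂ) + b * Complex.I)) ^ 2)‖) := by
    simp_rw [e3]
    exact (wp_summable1 (by positivity) _).mul_left _
  have h4 := norm_tsum_le_tsum_norm hs
  simp_rw [e3] at h4
  rw [tsum_mul_left] at h4
  rw [e2, Complex.norm_real, Real.norm_of_nonneg (Real.exp_pos _).le]
  have h5 : Real.exp (-t * u ^ 2) * Real.exp (t * u ^ 2) = 1 := by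
    rw [← Real.exp_add]; simp
  calc _ ≤ Real.exp (-t * u ^ 2) * (Real.sqrt (Real.pi / t) * (Real.exp (t * u ^ 2) * ∑' n : ℤ, Real.exp (-(Real.pi ^ 2 / t) * ((n : ℝ) + (- b)) ^ 2))) := by gcongr
    _ = (Real.exp (-t * u ^ 2) * Real.exp (t * u ^ 2)) * (Real.sqrt (Real.pi / t) * ∑' n : ℤ, Real.exp (-(Real.pi ^ 2 / t) * ((n : ℝ) + (- b)) ^ 2)) := by ring
    _ = _ := by rw [h5, one_mul]

def wpEquiv : ℤ × ℤ ≃ GaussianInt where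
  toFun p := ⟨p.1, p.2⟩
  invFun z := (z.re, z.im)
  left_inv _ := rfl
  right_inv _ := rfl

lemma wp_exp_split (t : ℝ) (a : ℂ) (p : ℤ × ℤ) :
    Real.exp (-t * cN ((wpEquiv p : ℂ) + a)) =
      Real.exp (-t * ((p.1 : ℝ) + a.re) ^ 2) * Real.exp (-t * ((p.2 : ℝ) + a.im) ^ 2) := by
  rw [← Real.exp_add]
  congr 1
  simp [cN, wpEquiv]
  ring

lemma wp_summable2 {t : ℝ} (ht : 0 < t) (a : ℂ) :
    Summable (fun q : GaussianInt => Real.exp (-t * cN ((q : ℂ) + a))) := by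
  rw [← wpEquiv.summable_iff]
  have := (wp_summable1 ht a.re).mul_of_nonneg (wp_summable1 ht a.im)
    (fun _ => (Real.exp_pos _).le) (fun _ => (Real.exp_pos _).le)
  refine this.congr fun p => ?_
  rw [Function.comp, wp_exp_split]

lemma wp_poisson2 {t : ℝ} (ht : 0 < t) (a b : ℂ) :
    ‖∑' q : GaussianInt, ((Real.exp (-t * cN ((q : ℂ) + a)) : ℝ) : ℂ) * e ((b * q).re)‖
      ≤ Real.pi / t * ∑' β : GaussianInt, Real.exp (-(Real.pi ^ 2 / t) * cN ((β : ℂ) - (starRingEnd ℂ) b)) := by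
  have hpi := Real.pi_pos
  have hsn : ∀ u b : ℝ, Summable fun n : ℤ => ‖((Real.exp (-t * ((n : ℝ) + u) ^ 2) : ℝ) : ℂ) * e (b * n)‖ := by
    intro u b
    refine (wp_summable1 ht u).congr fun n => ?_
    rw [norm_mul, wp_norm_e, mul_one, Complex.norm_real, Real.norm_of_nonneg (Real.exp_pos _).le]
  have e1 : (∑' q : GaussianInt, ((Real.exp (-t * cN ((q : ℂ) + a)) : ℝ) : ℂ) * e ((b * q).re))
     = (∑' n : ℤ, ((Real.exp (-t * ((n : ℝ) + a.re) ^ 2) : ℝ) : ℂ) * e (b.re * n)) *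
       (∑' n : ℤ, ((Real.exp (-t * ((n : ℝ) + a.im) ^ 2) : ℝ) : ℂ) * e ((-b.im) * n)) := by
    rw [tsum_mul_tsum_of_summable_norm (hsn _ _) (hsn _ _), ← wpEquiv.tsum_eq]
    congr 1; ext p
    rw [wp_exp_split]
    have : (b * (wpEquiv p : ℂ)).re = b.re * p.1 + (-b.im) * p.2 := by
      simp [wpEquiv]; ring
    rw [this, wp_e_add]
    push_cast
    ring
  have e2 : (∑' β : GaussianInt, Real.exp (-(Real.pi ^ 2 / t) * cN ((β : ℂ) - (starRingEnd ℂ) b)))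
     = (∑' n : ℤ, Real.exp (-(Real.pi ^ 2 / t) * ((n : ℝ) + (- b.re)) ^ 2)) *
       (∑' n : ℤ, Real.exp (-(Real.pi ^ 2 / t) * ((n : ℝ) + (- (-b.im))) ^ 2)) := by
    rw [tsum_mul_tsum_of_summable_norm (wp_summable1 (by positivity) _).norm (wp_summable1 (by positivity) _).norm, ← wpEquiv.tsum_eq]
    congr 1; ext p
    rw [sub_eq_add_neg, wp_exp_split]
    simp
  rw [e1, e2, norm_mul]
  refine (mul_le_mul (wp_poisson1 ht _ _) (wp_poisson1 ht _ _) (norm_nonneg _) (by positivity)).trans (le_of_eq ?_)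
  have := Real.mul_self_sqrt (show 0 ≤ Real.pi / t by positivity)
  rw [mul_mul_mul_comm, this]

def wpT (t : ℝ) (a : ℂ) (P : ℂ[X]) : ℂ :=
  ∑' q : GaussianInt, ((Real.exp (-t * cN ((q : ℂ) + a)) : ℝ) : ℂ) * e ((P.eval (q : ℂ)).re)

def wpB (t : ℝ) (b : ℂ) : ℝ≥0∞ :=
  ENNReal.ofReal (Real.pi / t) * ∑' β : GaussianInt,
    ENNReal.ofReal (Real.exp (-(Real.pi ^ 2 / t) * cN ((β : ℂ) - (starRingEnd ℂ) b)))

lemma wp_norm_term (t : ℝ) (a : ℂ) (x : ℝ) (q : GaussianInt) :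
    ‖((Real.exp (-t * cN ((q : ℂ) + a)) : ℝ) : ℂ) * e x‖ = Real.exp (-t * cN ((q : ℂ) + a)) := by
  rw [norm_mul, wp_norm_e, mul_one, Complex.norm_real, Real.norm_of_nonneg (Real.exp_pos _).le]

lemma wp_base {t : ℝ} (ht : 0 < t) (a : ℂ) (P : ℂ[X]) (hP : P.natDegree ≤ 1) :
    ‖wpT t a P‖ₑ ≤ wpB t (P.coeff 1) := by
  have hpi := Real.pi_pos
  have e1 : wpT t a P = e ((P.coeff 0).re) * ∑' q : GaussianInt,
      ((Real.exp (-t * cN ((q : ℂ) + a)) : ℝ) : ℂ) * e ((P.coeff 1 * q).re) := by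
    unfold wpT
    rw [← tsum_mul_left]
    congr 1; ext q
    have : P.eval (q : ℂ) = P.coeff 0 + P.coeff 1 * q := by
      conv_lhs => rw [Polynomial.eq_X_add_C_of_natDegree_le_one hP]
      simp; ring
    rw [this, Complex.add_re, wp_e_add]
    ring
  have h := wp_poisson2 ht a (P.coeff 1)
  have e2 : wpB t (P.coeff 1) = ENNReal.ofReal (Real.pi / t * ∑' β : GaussianInt,
      Real.exp (-(Real.pi ^ 2 / t) * cN ((β : ℂ) - (starRingEnd ℂ) (P.coeff 1)))) := by
    unfold wpB
    rw [ENNReal.ofReal_mul (by positivity), ENNReal.ofReal_tsum_of_nonneg]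
    · intro n; positivity
    · simpa [sub_eq_add_neg] using wp_summable2 (t := Real.pi ^ 2 / t) (by positivity) (-(starRingEnd ℂ) (P.coeff 1))
  rw [e2, ← ofReal_norm, e1, norm_mul, wp_norm_e, one_mul]
  exact ENNReal.ofReal_le_ofReal h

def wpShear : GaussianInt × GaussianInt ≃ GaussianInt × GaussianInt where
  toFun p := (p.2 + p.1, p.2)
  invFun p := (p.1 - p.2, p.2)
  left_inv p := by simp
  right_inv p := by simp

lemma wp_weyl {t : ℝ} (ht : 0 < t) (a : ℂ) (P : ℂ[X]) :
    ‖wpT t a P‖ₑ ^ 2 ≤ ∑' α : GaussianInt, ENNReal.ofReal (Real.exp (-(t / 2) * gN α)) *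
      ‖wpT (2 * t) (a + α / 2) (taylor (α : ℂ) P - P)‖ₑ := by
  set F : GaussianInt → ℂ := fun q =>
    ((Real.exp (-t * cN ((q : ℂ) + a)) : ℝ) : ℂ) * e ((P.eval (q : ℂ)).re) with hF
  have hs : Summable (fun q => ‖F q‖) := by
    refine (wp_summable2 ht a).congr fun q => ?_
    rw [hF, wp_norm_term]
  have hs' : Summable (fun q => ‖(starRingEnd ℂ) (F q)‖) := by
    simpa using hs
  have e0 : ‖wpT t a P‖ₑ ^ 2 = ‖(∑' q, F q) * (∑' q, (starRingEnd ℂ) (F q))‖ₑ := by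
    rw [enorm_mul, ← Complex.conj_tsum, sq]
    congr 1
    rw [← ofReal_norm, ← ofReal_norm, RCLike.norm_conj]
    rfl
  have hsum := summable_mul_of_summable_norm hs hs'
  rw [e0, tsum_mul_tsum_of_summable_norm hs hs', ← wpShear.tsum_eq]
  have hsum2 : Summable fun c : GaussianInt × GaussianInt => F (wpShear c).1 * (starRingEnd ℂ) (F (wpShear c).2) :=
    (wpShear.summable_iff).2 hsum
  rw [hsum2.tsum_prod]
  refine enorm_tsum_le_tsum_enorm.trans (ENNReal.tsum_le_tsum fun α => le_of_eq ?_)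
  have e1 : (∑' q, F (wpShear (α, q)).1 * (starRingEnd ℂ) (F (wpShear (α, q)).2))
     = ((Real.exp (-(t / 2) * gN α) : ℝ) : ℂ) * wpT (2 * t) (a + α / 2) (taylor (α : ℂ) P - P) := by
    unfold wpT
    rw [← tsum_mul_left]
    congr 1; ext q
    simp only [hF, wpShear, Equiv.coe_fn_mk, map_mul, Complex.conj_ofReal, wp_conj_e,
      Polynomial.eval_sub, Polynomial.taylor_eval, Complex.sub_re, map_add]
    rw [sub_eq_add_neg, wp_e_add]
    have : Real.exp (-t * cN ((q : ℂ) + α + a)) * Real.exp (-t * cN ((q : ℂ) + a))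
      = Real.exp (-(t / 2) * gN α) * Real.exp (-(2 * t) * cN ((q : ℂ) + (a + α / 2))) := by
      rw [← Real.exp_add, ← Real.exp_add]
      congr 1
      have h1 : ((α : ℂ) / 2).re = (α : ℂ).re / 2 := by simp
      have h2 : ((α : ℂ) / 2).im = (α : ℂ).im / 2 := by simp
      simp only [cN, gN, Complex.add_re, Complex.add_im, h1, h2, GaussianInt.intCast_re, GaussianInt.intCast_im]
      ring
    have h3 := congrArg (fun x : ℝ => (x : ℂ)) this
    push_cast at h3 ⊢
    linear_combination (e ((P.eval ((q : ℂ) + α)).re) * e (-(P.eval (q : ℂ)).re)) * h3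
  rw [e1, enorm_mul]
  congr 1
  rw [← ofReal_norm, Complex.norm_real, Real.norm_of_nonneg (Real.exp_pos _).le]

lemma wp_jensen {ι : Type*} (w f : ι → ℝ≥0∞) (n : ℕ) :
    (∑' i, w i * f i) ^ (n + 1) ≤ (∑' i, w i) ^ n * ∑' i, w i * f i ^ (n + 1) := by
  have hfin : ∀ s : Finset ι, (∑ i ∈ s, w i * f i) ^ (n + 1)
      ≤ (∑ i ∈ s, w i) ^ n * ∑ i ∈ s, w i * f i ^ (n + 1) := by
    intro s
    have hp : (1 : ℝ) ≤ ((n + 1 : ℕ) : ℝ) := by push_cast; linarith [Nat.cast_nonneg (α := ℝ) n]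
    have hp0 : ((n + 1 : ℕ) : ℝ) ≠ 0 := by positivity
    have h := ENNReal.inner_le_weight_mul_Lp_of_nonneg s hp w f
    have h2 := pow_le_pow_left' h (n + 1)
    refine h2.trans (le_of_eq ?_)
    rw [mul_pow, ← ENNReal.rpow_natCast, ← ENNReal.rpow_natCast (_ ^ _), ← ENNReal.rpow_mul, ← ENNReal.rpow_mul,
      inv_mul_cancel₀ hp0, ENNReal.rpow_one, sub_mul, inv_mul_cancel₀ hp0]
    simp only [ENNReal.rpow_natCast]
    congr 1
    push_cast
    rw [one_mul, add_sub_cancel_right, ENNReal.rpow_natCast]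
  have htend : Filter.Tendsto (fun s : Finset ι => (∑ i ∈ s, w i * f i) ^ (n + 1)) Filter.atTop
      (nhds ((∑' i, w i * f i) ^ (n + 1))) :=
    (ENNReal.continuous_pow (n + 1)).continuousAt.tendsto.comp ENNReal.summable.hasSum
  refine le_of_tendsto' htend fun s => (hfin s).trans ?_
  gcongr <;> exact ENNReal.sum_le_tsum _

lemma wp_diff (P : ℂ[X]) (n : ℕ) (hP : P.natDegree ≤ n + 1) (α : ℂ) :
    (taylor α P - P).natDegree ≤ n ∧ (taylor α P - P).coeff n = (n + 1) * α * P.coeff (n + 1) := by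
  have hc : ∀ m, n + 1 < m → P.coeff m = 0 := fun m hm =>
    Polynomial.coeff_eq_zero_of_natDegree_lt (by omega)
  constructor
  · rw [Polynomial.natDegree_le_iff_coeff_eq_zero]
    intro m hm
    rcases Nat.lt_or_ge (n + 1) m with h | h
    · rw [Polynomial.coeff_sub, hc m h, sub_zero]
      refine Polynomial.coeff_eq_zero_of_natDegree_lt ?_
      rw [Polynomial.natDegree_taylor]; omega
    · have : m = n + 1 := by omega
      subst this
      have : Polynomial.hasseDeriv (n + 1) P = C (P.coeff (n + 1)) := by
        ext i
        rw [Polynomial.hasseDeriv_coeff, Polynomial.coeff_C]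
        split_ifs with hi
        · subst hi; simp
        · rw [hc _ (by omega), mul_zero]
      rw [Polynomial.coeff_sub, Polynomial.taylor_coeff, this]; simp
  · have : Polynomial.hasseDeriv n P = C (P.coeff n) + C ((n + 1) * P.coeff (n + 1)) * X := by
      ext i
      rw [Polynomial.hasseDeriv_coeff]
      rcases i with _ | _ | i
      · simp
      · simp [Polynomial.coeff_C, add_comm 1 n]
      · rw [hc _ (by omega)]
        simp [Polynomial.coeff_C, Polynomial.coeff_one]
    rw [Polynomial.coeff_sub, Polynomial.taylor_coeff, this]; simp; ring

def wpTheta (s : ℝ) : ℝ≥0∞ := ∑' α : GaussianInt, ENNReal.ofReal (Real.exp (-s * gN α))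

lemma wp_tsum_cons (m : ℕ) (f : (Fin (m + 1) → GaussianInt) → ℝ≥0∞) :
    ∑' α, f α = ∑' a : GaussianInt, ∑' α : Fin m → GaussianInt, f (Fin.cons a α) := by
  rw [← (Fin.consEquiv (fun _ => GaussianInt)).tsum_eq, ENNReal.tsum_prod']
  rfl

lemma wp_main (m : ℕ) : ∀ (s t : ℝ) (_ : 0 < t) (_ : s ≤ t / 2) (a : ℂ) (P : ℂ[X])
    (_ : P.natDegree ≤ m + 1),
    ‖wpT t a P‖ₑ ^ (2 ^ m) ≤ wpTheta s ^ (2 ^ m - (m + 1)) *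
      ∑' α : Fin m → GaussianInt, (∏ v, ENNReal.ofReal (Real.exp (-s * gN (α v)))) *
        wpB (2 ^ m * t) ((Nat.factorial (m + 1) : ℂ) * (∏ v, (α v : ℂ)) * P.coeff (m + 1)) := by
  induction m with
  | zero =>
    intro s t ht hs a P hP
    simpa using wp_base ht a P hP
  | succ m ih =>
    intro s t ht hs a P hP
    have hgn : ∀ α, 0 ≤ gN α := fun α => by unfold gN; positivity
    set w : GaussianInt → ℝ≥0∞ := fun α => ENNReal.ofReal (Real.exp (-s * gN α)) with hw
    have h1 : ‖wpT t a P‖ₑ ^ 2 ≤ ∑' α : GaussianInt, w α *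
      ‖wpT (2 * t) (a + α / 2) (taylor (α : ℂ) P - P)‖ₑ := by
      refine (wp_weyl ht a P).trans (ENNReal.tsum_le_tsum fun α => ?_)
      gcongr
      refine ENNReal.ofReal_le_ofReal (Real.exp_le_exp.2 ?_)
      nlinarith [hgn α]
    obtain ⟨n, hn⟩ : ∃ n, 2 ^ m = n + 1 := ⟨2 ^ m - 1, by have := Nat.one_le_two_pow (n := m); omega⟩
    have hlt : m < 2 ^ m := Nat.lt_two_pow_self
    calc ‖wpT t a P‖ₑ ^ (2 ^ (m + 1)) = (‖wpT t a P‖ₑ ^ 2) ^ (2 ^ m) := by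
          rw [← pow_mul, pow_succ']
      _ ≤ (∑' α : GaussianInt, w α *
            ‖wpT (2 * t) (a + α / 2) (taylor (α : ℂ) P - P)‖ₑ) ^ (2 ^ m) := by gcongr
      _ ≤ (∑' α, w α) ^ (2 ^ m - 1) * ∑' α : GaussianInt, w α *
            ‖wpT (2 * t) (a + α / 2) (taylor (α : ℂ) P - P)‖ₑ ^ (2 ^ m) := by
          rw [hn]; exact wp_jensen _ _ _
      _ ≤ (∑' α, w α) ^ (2 ^ m - 1) * ∑' α : GaussianInt, w α * (wpTheta s ^ (2 ^ m - (m + 1)) *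
            ∑' γ : Fin m → GaussianInt, (∏ v, w (γ v)) *
            wpB (2 ^ m * (2 * t)) ((Nat.factorial (m + 1) : ℂ) * (∏ v, (γ v : ℂ)) *
              (taylor (α : ℂ) P - P).coeff (m + 1))) := by
          gcongr with α
          exact ih s (2 * t) (by linarith) (by linarith) _ _ (wp_diff P (m + 1) hP α).1
      _ = wpTheta s ^ (2 ^ (m + 1) - (m + 1 + 1)) * ∑' α : GaussianInt, w α *
            ∑' γ : Fin m → GaussianInt, (∏ v, w (γ v)) *
            wpB (2 ^ m * (2 * t)) ((Nat.factorial (m + 1) : ℂ) * (∏ v, (γ v : ℂ)) *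
              (taylor (α : ℂ) P - P).coeff (m + 1)) := by
          have : 2 ^ (m + 1) - (m + 1 + 1) = (2 ^ m - 1) + (2 ^ m - (m + 1)) := by
            rw [pow_succ]; omega
          rw [this, pow_add, mul_assoc]
          congr 1
          rw [← ENNReal.tsum_mul_left]
          congr 1; ext α
          ring
      _ = _ := by
          congr 1
          rw [wp_tsum_cons]
          congr 1; ext α
          rw [← ENNReal.tsum_mul_left]
          congr 1; ext γ
          rw [(wp_diff P (m + 1) hP α).2, Fin.prod_univ_succ, Fin.prod_univ_succ]
          simp only [Fin.cons_zero, Fin.cons_succ]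
          rw [← mul_assoc]
          congr 2
          · ring
          · rw [Nat.factorial_succ (m + 1)]
            push_cast
            ring

def wpA (Q : ℝ) (b : ℂ) : ℝ≥0∞ :=
  ∑' β : GaussianInt, ENNReal.ofReal (Real.exp (-Real.pi * Q * cN ((β : ℂ) - (starRingEnd ℂ) b)))

lemma wp_cN_nonneg (z : ℂ) : 0 ≤ cN z := by unfold cN; positivity

lemma wp_gN_nonneg (z : GaussianInt) : 0 ≤ gN z := by unfold gN; positivity

lemma wp_gN_eq (z : GaussianInt) : gN z = cN (z : ℂ) := by
  simp [gN, cN]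

lemma wp_summableA {Q : ℝ} (hQ : 0 < Q) (b : ℂ) : Summable fun β : GaussianInt =>
    Real.exp (-Real.pi * Q * cN ((β : ℂ) - (starRingEnd ℂ) b)) := by
  have hpi := Real.pi_pos
  simpa [sub_eq_add_neg] using wp_summable2 (t := Real.pi * Q) (by positivity) (-(starRingEnd ℂ) b)

lemma wp_A_eq {Q : ℝ} (hQ : 0 < Q) (b : ℂ) : wpA Q b = ENNReal.ofReal (∑' β : GaussianInt,
    Real.exp (-Real.pi * Q * cN ((β : ℂ) - (starRingEnd ℂ) b))) := by
  rw [ENNReal.ofReal_tsum_of_nonneg (fun _ => (Real.exp_pos _).le) (wp_summableA hQ b)]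
  rfl

lemma wp_poisson0 {t : ℝ} (ht : 0 < t) (a : ℂ) :
    ∑' q : GaussianInt, Real.exp (-t * cN ((q : ℂ) + a))
      ≤ Real.pi / t * ∑' β : GaussianInt, Real.exp (-(Real.pi ^ 2 / t) * cN (β : ℂ)) := by
  have h := wp_poisson2 ht a 0
  have e0 : e 0 = 1 := by simp [e]
  simp only [zero_mul, Complex.zero_re, e0, mul_one, map_zero, sub_zero, ← Complex.ofReal_tsum,
    Complex.norm_real] at h
  exact (le_abs_self _).trans h

lemma wp_K : ∃ K : ℝ, 0 < K ∧ (∀ Q, 1 ≤ Q → ∀ b, wpA Q b ≤ ENNReal.ofReal K) ∧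
    ∀ s, 0 < s → s ≤ Real.pi → wpTheta s ≤ ENNReal.ofReal (Real.pi / s * K) := by
  have hpi := Real.pi_pos
  have hsK : Summable fun β : GaussianInt => Real.exp (-Real.pi * cN (β : ℂ)) := by
    simpa using wp_summable2 hpi 0
  refine ⟨1 + ∑' β : GaussianInt, Real.exp (-Real.pi * cN (β : ℂ)), ?_, ?_, ?_⟩
  · have : 0 ≤ ∑' β : GaussianInt, Real.exp (-Real.pi * cN (β : ℂ)) := tsum_nonneg fun _ => (Real.exp_pos _).le
    linarith
  · intro Q hQ b
    rw [wp_A_eq (by linarith)]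
    refine ENNReal.ofReal_le_ofReal ?_
    have h1 := wp_poisson0 hpi (-(starRingEnd ℂ) b)
    rw [div_self hpi.ne', one_mul, sq, mul_div_assoc, div_self hpi.ne', mul_one] at h1
    have h2 : ∑' β : GaussianInt, Real.exp (-Real.pi * Q * cN ((β : ℂ) - (starRingEnd ℂ) b))
       ≤ ∑' β : GaussianInt, Real.exp (-Real.pi * cN ((β : ℂ) + -(starRingEnd ℂ) b)) := by
      refine Summable.tsum_le_tsum (fun β => ?_) (wp_summableA (by linarith) b) (wp_summable2 hpi _)
      rw [← sub_eq_add_neg]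
      refine Real.exp_le_exp.2 ?_
      have := mul_nonneg hpi.le (wp_cN_nonneg ((β : ℂ) - (starRingEnd ℂ) b))
      nlinarith
    linarith
  · intro s hs hsp
    have h0 : wpTheta s = ENNReal.ofReal (∑' q : GaussianInt, Real.exp (-s * cN ((q : ℂ) + 0))) := by
      rw [ENNReal.ofReal_tsum_of_nonneg (fun _ => (Real.exp_pos _).le) (wp_summable2 hs 0)]
      unfold wpTheta
      simp_rw [wp_gN_eq, add_zero]
    rw [h0]
    refine ENNReal.ofReal_le_ofReal ((wp_poisson0 hs 0).trans ?_)
    have hge : Real.pi ≤ Real.pi ^ 2 / s := by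
      rw [le_div_iff₀ hs]; nlinarith
    have h2 : ∑' β : GaussianInt, Real.exp (-(Real.pi ^ 2 / s) * cN (β : ℂ))
       ≤ ∑' β : GaussianInt, Real.exp (-Real.pi * cN (β : ℂ)) := by
      refine Summable.tsum_le_tsum (fun β => ?_) (by simpa using wp_summable2 (t := Real.pi ^ 2 / s) (by positivity) 0) hsK
      refine Real.exp_le_exp.2 ?_
      nlinarith [wp_cN_nonneg (β : ℂ)]
    gcongr
    linarith

lemma wp_prod_tsum (m : ℕ) (w : GaussianInt → ℝ≥0∞) :
    ∑' α : Fin m → GaussianInt, ∏ v, w (α v) = (∑' a, w a) ^ m := by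
  induction m with
  | zero => simp
  | succ m ih =>
    rw [wp_tsum_cons, pow_succ', ← ENNReal.tsum_mul_right]
    congr 1; ext a
    simp_rw [Fin.prod_univ_succ, Fin.cons_zero, Fin.cons_succ]
    rw [ENNReal.tsum_mul_left, ih]

lemma wp_decay (m : ℕ) (c ε : ℝ) (hc : 0 < c) (hε : 0 < ε) : ∃ D : ℝ, 0 < D ∧
    ∀ Q : ℝ, 1 ≤ Q → Q ^ m * Real.exp (-(c * Q ^ ε)) ≤ D := by
  obtain ⟨n, hn⟩ := exists_nat_ge ((m : ℝ) / ε)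
  refine ⟨n.factorial / c ^ n, by positivity, fun Q hQ => ?_⟩
  have hQ0 : 0 < Q := by linarith
  have h1 := Real.pow_div_factorial_le_exp (c * Q ^ ε) (by positivity) n
  have h2 : Q ^ m ≤ (Q ^ ε) ^ n := by
    rw [← Real.rpow_natCast, ← Real.rpow_natCast, ← Real.rpow_mul hQ0.le]
    refine Real.rpow_le_rpow_of_exponent_le hQ ?_
    rw [div_le_iff₀ hε] at hn; linarith
  rw [Real.exp_neg, ← div_eq_mul_inv, div_le_iff₀ (Real.exp_pos _)]
  have hf : (0 : ℝ) < n.factorial := by positivity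
  have hcn : 0 < c ^ n := by positivity
  rw [div_le_iff₀ hf, mul_pow] at h1
  rw [div_mul_eq_mul_div, le_div_iff₀ hcn]
  nlinarith

lemma wp_finite (m : ℕ) (Y : ℝ) : Finite {α : Fin m → GaussianInt // ∀ v, gN (α v) ≤ Y} := by
  have h1 : {z : GaussianInt | gN z ≤ Y}.Finite := by
    obtain ⟨n, hn⟩ := exists_nat_ge Y
    refine (((Set.finite_Icc (-(n : ℤ)) n).prod (Set.finite_Icc (-(n : ℤ)) n)).image wpEquiv).subset ?_
    intro z hz
    have hz' : z.re ^ 2 + z.im ^ 2 ≤ (n : ℤ) := by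
      have : (z.re : ℝ) ^ 2 + (z.im : ℝ) ^ 2 ≤ n := le_trans hz hn
      exact_mod_cast this
    refine ⟨(z.re, z.im), ⟨⟨?_, ?_⟩, ⟨?_, ?_⟩⟩, rfl⟩ <;> simp only <;>
      nlinarith [sq_nonneg z.re, sq_nonneg z.im, sq_nonneg (z.re + 1), sq_nonneg (z.re - 1), sq_nonneg (z.im + 1), sq_nonneg (z.im - 1), Int.le_self_sq z.re, Int.le_self_sq z.im, Int.le_self_sq (-z.re), Int.le_self_sq (-z.im)]
  have h2 := Set.Finite.pi' (fun _ : Fin m => h1)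
  exact h2.to_subtype

lemma wp_trunc (m : ℕ) (s Y : ℝ) (hs : 0 < s) (K : ℝ≥0∞) (A : (Fin m → GaussianInt) → ℝ≥0∞)
    (hA : ∀ α, A α ≤ K) :
    ∑' α : Fin m → GaussianInt, (∏ v, ENNReal.ofReal (Real.exp (-s * gN (α v)))) * A α ≤
      (∑' α : {α : Fin m → GaussianInt // ∀ v, gN (α v) ≤ Y}, A α) +
        ENNReal.ofReal (Real.exp (-(s / 2 * Y))) * wpTheta (s / 2) ^ m * K := by
  classical
  have e1 : (∑' α : {α : Fin m → GaussianInt // ∀ v, gN (α v) ≤ Y}, A α)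
      = ∑' α, Set.indicator {α : Fin m → GaussianInt | ∀ v, gN (α v) ≤ Y} A α :=
    tsum_subtype {α : Fin m → GaussianInt | ∀ v, gN (α v) ≤ Y} A
  have e2 : ENNReal.ofReal (Real.exp (-(s / 2 * Y))) * wpTheta (s / 2) ^ m * K
      = ∑' α : Fin m → GaussianInt, ENNReal.ofReal (Real.exp (-(s / 2 * Y))) *
        (∏ v, ENNReal.ofReal (Real.exp (-(s / 2) * gN (α v)))) * K := by
    rw [ENNReal.tsum_mul_right, ENNReal.tsum_mul_left,
      wp_prod_tsum m (fun a => ENNReal.ofReal (Real.exp (-(s / 2) * gN a)))]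
    rfl
  rw [e1, e2, ← ENNReal.tsum_add]
  refine ENNReal.tsum_le_tsum fun α => ?_
  have hp : ∀ s : ℝ, ∏ v, ENNReal.ofReal (Real.exp (-s * gN (α v))) =
      ENNReal.ofReal (Real.exp (-s * ∑ v, gN (α v))) := by
    intro s
    rw [← ENNReal.ofReal_prod_of_nonneg (fun _ _ => (Real.exp_pos _).le), ← Real.exp_sum, Finset.mul_sum]
  rw [hp, hp]
  by_cases h : ∀ v, gN (α v) ≤ Y
  · rw [Set.indicator_of_mem (by exact h)]
    refine le_add_right ?_
    have : ENNReal.ofReal (Real.exp (-s * ∑ v, gN (α v))) ≤ 1 := by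
      rw [ENNReal.ofReal_le_one, Real.exp_le_one_iff]
      have : 0 ≤ ∑ v, gN (α v) := Finset.sum_nonneg fun _ _ => wp_gN_nonneg _
      nlinarith
    exact mul_le_of_le_one_left' this
  · refine le_add_left ?_
    push Not at h
    obtain ⟨v, hv⟩ := h
    have h1 : gN (α v) ≤ ∑ v, gN (α v) :=
      Finset.single_le_sum (f := fun v => gN (α v)) (fun _ _ => wp_gN_nonneg _) (Finset.mem_univ v)
    rw [← ENNReal.ofReal_mul (Real.exp_pos _).le, ← Real.exp_add]
    refine mul_le_mul' (ENNReal.ofReal_le_ofReal (Real.exp_le_exp.2 ?_)) (hA α)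
    nlinarith

lemma wp_final (m : ℕ) (hm : 1 ≤ m) (ε : ℝ) (hε : 0 < ε) : ∃ C : ℝ, 0 < C ∧
    ∀ Q0 : ℝ, 2 ≤ Q0 → ∀ θ : ℂ,
      ‖wpT (Real.pi / (2 ^ m * Q0)) 0 (Polynomial.C θ * X ^ (m + 1))‖ ^ (2 ^ m)
        ≤ C * Q0 ^ ((2 : ℝ) ^ m - ((m + 1 : ℕ) : ℝ) + 1 + ε) *
          ∑' α : {α : Fin m → GaussianInt // ∀ v, gN (α v) ≤ Q0 ^ ((1 : ℝ) + ε)},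
            ∑' β : GaussianInt, Real.exp (-Real.pi * Q0 * cN ((β : ℂ) - (starRingEnd ℂ)
              ((Nat.factorial (m + 1) : ℂ) * (∏ v, (((α : Fin m → GaussianInt) v : GaussianInt) : ℂ)) * θ))) := by
  have hpi := Real.pi_pos
  obtain ⟨K, hK, hKA, hKT⟩ := wp_K
  obtain ⟨D, hD, hDQ⟩ := wp_decay m (Real.pi / (4 * 2 ^ m)) ε (by positivity) hε
  set p := 2 ^ m - (m + 1) with hp
  have hlt : m < 2 ^ m := Nat.lt_two_pow_self
  set D' := D * (4 * 2 ^ m * K) ^ m * K with hD'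
  refine ⟨(2 * 2 ^ m * K) ^ p * (1 + D'), by positivity, fun Q0 hQ0 θ => ?_⟩
  have hQ : 0 < Q0 := by linarith
  set t := Real.pi / (2 ^ m * Q0) with ht
  have htpos : 0 < t := by positivity
  have hone : (1 : ℝ) ≤ 2 ^ m := one_le_pow₀ (by norm_num)
  have htle : t ≤ Real.pi := by
    rw [ht, div_le_iff₀ (by positivity)]
    nlinarith [mul_le_mul hone hQ0 (by norm_num) (by positivity)]
  set b : (Fin m → GaussianInt) → ℂ := fun α => (Nat.factorial (m + 1) : ℂ) * (∏ v, (α v : ℂ)) * θ with hb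
  set Rr : ℝ := ∑' α : {α : Fin m → GaussianInt // ∀ v, gN (α v) ≤ Q0 ^ ((1 : ℝ) + ε)},
      ∑' β : GaussianInt, Real.exp (-Real.pi * Q0 * cN ((β : ℂ) - (starRingEnd ℂ) (b α))) with hRr
  have hfin := wp_finite m (Q0 ^ ((1 : ℝ) + ε))
  have hR : (∑' α : {α : Fin m → GaussianInt // ∀ v, gN (α v) ≤ Q0 ^ ((1 : ℝ) + ε)}, wpA Q0 (b α))
      = ENNReal.ofReal Rr := by
    rw [hRr, ENNReal.ofReal_tsum_of_nonneg]
    · congr 1; ext α; exact wp_A_eq hQ _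
    · exact fun α => tsum_nonneg fun _ => (Real.exp_pos _).le
    · exact Summable.of_finite
  have hR1 : 1 ≤ Rr := by
    have h0 : ∀ v : Fin m, gN ((0 : Fin m → GaussianInt) v) ≤ Q0 ^ ((1 : ℝ) + ε) := by
      intro v; simp [gN]; positivity
    have h1 : 1 ≤ ∑' β : GaussianInt, Real.exp (-Real.pi * Q0 * cN ((β : ℂ) - (starRingEnd ℂ) (b 0))) := by
      refine le_trans ?_ ((wp_summableA hQ (b 0)).le_tsum 0 (fun _ _ => (Real.exp_pos _).le))
      have : b 0 = 0 := by
        have : (0 : ℕ) ≠ m := by omega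
        simp [hb, Finset.prod_const, this.symm]
      simp [this, cN]
    refine h1.trans ?_
    exact (Summable.of_finite (f := fun α : {α : Fin m → GaussianInt // ∀ v, gN (α v) ≤ Q0 ^ ((1 : ℝ) + ε)} =>
      ∑' β : GaussianInt, Real.exp (-Real.pi * Q0 * cN ((β : ℂ) - (starRingEnd ℂ) (b α))))).le_tsum
        ⟨0, h0⟩ (fun α _ => tsum_nonneg fun _ => (Real.exp_pos _).le)
  have hdeg : (Polynomial.C θ * X ^ (m + 1)).natDegree ≤ m + 1 := Polynomial.natDegree_C_mul_X_pow_le _ _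
  have hmain := wp_main m (t / 2) t htpos le_rfl 0 _ hdeg
  have hB : ∀ α : Fin m → GaussianInt, wpB (2 ^ m * t) ((Nat.factorial (m + 1) : ℂ) * (∏ v, (α v : ℂ)) *
      (Polynomial.C θ * X ^ (m + 1)).coeff (m + 1)) = ENNReal.ofReal Q0 * wpA Q0 (b α) := by
    intro α
    have h1 : 2 ^ m * t = Real.pi / Q0 := by rw [ht]; field_simp
    have h2 : Real.pi / (Real.pi / Q0) = Q0 := by field_simp
    have h3 : -(Real.pi ^ 2 / (Real.pi / Q0)) = -Real.pi * Q0 := by field_simp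
    unfold wpB wpA
    rw [h1, h2, h3, Polynomial.coeff_C_mul_X_pow, if_pos rfl]
  simp_rw [hB] at hmain
  have hre : ∀ α : Fin m → GaussianInt, (∏ v, ENNReal.ofReal (Real.exp (-(t / 2) * gN (α v)))) * (ENNReal.ofReal Q0 * wpA Q0 (b α))
     = ENNReal.ofReal Q0 * ((∏ v, ENNReal.ofReal (Real.exp (-(t / 2) * gN (α v)))) * wpA Q0 (b α)) := fun α => by ring
  simp_rw [hre] at hmain
  rw [ENNReal.tsum_mul_left] at hmain
  have htr := wp_trunc m (t / 2) (Q0 ^ ((1 : ℝ) + ε)) (by positivity) (ENNReal.ofReal K) (fun α => wpA Q0 (b α))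
    (fun α => hKA Q0 (by linarith) _)
  rw [hR] at htr
  have hT1 : wpTheta (t / 2) ≤ ENNReal.ofReal (2 * 2 ^ m * K * Q0) := by
    refine (hKT (t / 2) (by positivity) (by linarith)).trans (le_of_eq ?_)
    congr 1; rw [ht]; field_simp
  have hT2 : wpTheta (t / 2 / 2) ≤ ENNReal.ofReal (4 * 2 ^ m * K * Q0) := by
    refine (hKT (t / 2 / 2) (by positivity) (by linarith)).trans (le_of_eq ?_)
    congr 1; rw [ht]; field_simp; norm_num
  have hE : ENNReal.ofReal (Real.exp (-(t / 2 / 2 * Q0 ^ ((1 : ℝ) + ε)))) * wpTheta (t / 2 / 2) ^ m * ENNReal.ofReal K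
      ≤ ENNReal.ofReal D' := by
    calc _ ≤ ENNReal.ofReal (Real.exp (-(t / 2 / 2 * Q0 ^ ((1 : ℝ) + ε)))) * ENNReal.ofReal (4 * 2 ^ m * K * Q0) ^ m * ENNReal.ofReal K := by gcongr
      _ = ENNReal.ofReal (Real.exp (-(t / 2 / 2 * Q0 ^ ((1 : ℝ) + ε))) * (4 * 2 ^ m * K * Q0) ^ m * K) := by
          rw [← ENNReal.ofReal_pow (by positivity), ← ENNReal.ofReal_mul (by positivity), ← ENNReal.ofReal_mul (by positivity)]
      _ ≤ _ := by
          refine ENNReal.ofReal_le_ofReal ?_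
          have h1 : t / 2 / 2 * Q0 ^ ((1 : ℝ) + ε) = Real.pi / (4 * 2 ^ m) * Q0 ^ ε := by
            rw [Real.rpow_add hQ, Real.rpow_one, ht]; field_simp; norm_num
          rw [h1, hD']
          have h2 := hDQ Q0 (by linarith)
          calc _ = (Q0 ^ m * Real.exp (-(Real.pi / (4 * 2 ^ m) * Q0 ^ ε))) * (4 * 2 ^ m * K) ^ m * K := by
                rw [mul_pow _ Q0]; ring
            _ ≤ _ := by gcongr
  have hfinal : ENNReal.ofReal (‖wpT t 0 (Polynomial.C θ * X ^ (m + 1))‖ ^ (2 ^ m)) ≤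
      ENNReal.ofReal ((2 * 2 ^ m * K * Q0) ^ p * (Q0 * (Rr + D'))) := by
    rw [ENNReal.ofReal_pow (norm_nonneg _), ofReal_norm]
    refine hmain.trans ?_
    rw [ENNReal.ofReal_mul (by positivity), ENNReal.ofReal_mul (by positivity), ENNReal.ofReal_pow (by positivity),
      ENNReal.ofReal_add (by linarith) (by positivity)]
    gcongr
    exact htr.trans (by gcongr)
  rw [ENNReal.ofReal_le_ofReal_iff (by positivity)] at hfinal
  refine hfinal.trans ?_
  have hD'0 : 0 ≤ D' := by positivity
  have h1 : Rr + D' ≤ (1 + D') * Rr := by nlinarith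
  have h2 : Q0 ^ p * Q0 ≤ Q0 ^ ((2 : ℝ) ^ m - ((m + 1 : ℕ) : ℝ) + 1 + ε) := by
    rw [← pow_succ, ← Real.rpow_natCast]
    refine Real.rpow_le_rpow_of_exponent_le (by linarith) ?_
    have : ((p : ℕ) : ℝ) = (2 : ℝ) ^ m - ((m + 1 : ℕ) : ℝ) := by
      rw [hp, Nat.cast_sub (by omega)]; push_cast; ring
    rw [Nat.cast_add, this]; push_cast; linarith
  calc _ = (2 * 2 ^ m * K) ^ p * (Q0 ^ p * Q0) * (Rr + D') := by rw [mul_pow _ Q0]; ring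
    _ ≤ (2 * 2 ^ m * K) ^ p * (Q0 ^ ((2 : ℝ) ^ m - ((m + 1 : ℕ) : ℝ) + 1 + ε)) * ((1 + D') * Rr) := by gcongr
    _ = _ := by ring

end WP

/-- **Weyl differencing plus Poisson summation for the `k`-th power sums**
(inequality (42) of the paper). For `k ≥ 2`, `κ = 2^{k-1}`, `ε ∈ (0,1)` there is
`C(k,ε)` such that for `Q₀ ≥ 2`, `q₁ ≠ 0` and `r₁, j ∈ ℤ[i]`,
`|S_k(q₁,r₁,j)|^κ ≤ C Q₀^{κ-k+1+ε} ∑_{α, N(α_v) ≤ Q₀^{1+ε}} ∑_{β ∈ ℤ[i]}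
   exp(-π Q₀ N(β - conj(k!α₁⋯α_{k-1} j r₁/q₁^k)))`. -/
theorem weyl_poisson_power_sum :
    ∀ k : ℕ, 2 ≤ k → ∀ ε : ℝ, 0 < ε → ε < 1 → ∃ C : ℝ, 0 < C ∧
      ∀ Q0 : ℝ, 2 ≤ Q0 → ∀ q1 : GaussianInt, q1 ≠ 0 → ∀ r1 j : GaussianInt,
      ‖Sk k Q0 q1 r1 j‖ ^ (2 ^ (k - 1))
        ≤ C * Q0 ^ (((2 : ℝ) ^ (k - 1) : ℝ) - k + 1 + ε) *
          ∑' α : {α : Fin (k - 1) → GaussianInt // ∀ v, gN (α v) ≤ Q0 ^ ((1 : ℝ) + ε)},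
            ∑' β : GaussianInt,
              Real.exp (-Real.pi * Q0 *
                cN ((β : ℂ) - (starRingEnd ℂ)
                  ((Nat.factorial k : ℂ)
                    * (∏ v, (((α : Fin (k - 1) → GaussianInt) v : GaussianInt) : ℂ))
                    * (j : ℂ) * (r1 : ℂ) / (q1 : ℂ) ^ k))) := by
  intro k hk ε hε _
  obtain ⟨m, rfl⟩ : ∃ m, k = m + 1 := ⟨k - 1, by omega⟩
  obtain ⟨C, hC, h⟩ := wp_final m (by omega) ε hε
  refine ⟨C, hC, fun Q0 hQ0 q1 _ r1 j => ?_⟩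
  have h1 := h Q0 hQ0 ((j : ℂ) * (r1 : ℂ) / (q1 : ℂ) ^ (m + 1))
  have e1 : wpT (Real.pi / (2 ^ m * Q0)) 0
      (Polynomial.C ((j : ℂ) * (r1 : ℂ) / (q1 : ℂ) ^ (m + 1)) * Polynomial.X ^ (m + 1)) = Sk (m + 1) Q0 q1 r1 j := by
    unfold wpT Sk
    congr 1; ext q
    rw [add_zero, ← wp_gN_eq, Nat.add_sub_cancel]
    have h2 : -(Real.pi / (2 ^ m * Q0)) * gN q = -Real.pi * gN q / (2 ^ m * Q0) := by ring
    have h3 : (Polynomial.C ((j : ℂ) * (r1 : ℂ) / (q1 : ℂ) ^ (m + 1)) * Polynomial.X ^ (m + 1)).eval (q : ℂ)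
        = (j : ℂ) * (r1 : ℂ) * (q : ℂ) ^ (m + 1) / (q1 : ℂ) ^ (m + 1) := by
      simp; ring
    rw [h2, h3]
  rw [e1] at h1
  simp only [Nat.add_sub_cancel]
  refine h1.trans (le_of_eq ?_)
  congr 1
  congr 1; ext α
  congr 1; ext β
  rw [show ∀ x y z w : ℂ, x * (y * z / w) = x * y * z / w from fun x y z w => by ring]
  rfl
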